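/- (Backward asymptotics of null non-trapped trajectories, Section 4.) Let n ≥ 2 and suppose Assumptions A and B hold. Let (x₀,ξ₀) ∈ ℝ²ⁿ satisfy p₂(x₀,ξ₀) = 0 and ξ₀ ≠ 0, and let t ↦ (y(t),η(t)) be the global solution of the Hamilton equations y' = ∂_ξp₂(y,η), η' = −∂_xp₂(y,η) with (y(0),η(0)) = (x₀,ξ₀). Then there exists ξ₋ ≠ 0 such that η(t) → ξ₋ and y(t)/t → v(ξ₋) as t → −∞; consequently ŷ(t)·v̂(η(t)) → −1 as t → −∞, where ŷ(t) = y(t)/|y(t)|. -/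

import Mathlib

/-!
The proof is a virial argument. As `p₂` is even in `ξ`, reversing time and the sign of the momentum
reduces the claim to the behaviour as `t → +∞`. Uniqueness of solutions (`autonomous_unique`)
identifies the given trajectory with the escaping one of Assumption B, and shows that `η` never
vanishes.

Assumption A gives `y' = v(η) + O(⟨y⟩^{-μ} |η|)` and `η' = O(⟨y⟩^{-μ-1} |η|²)`. Since `p₂` may be
indefinite, conservation of energy does not bound `η`. Instead consider `F = y · v(η) / |η|`.
Where `|y|` is large, `F' ≥ c |η|`, because `|v(η)| ≥ c |η|` and the errors are
`O(⟨y⟩^{-μ} |η|)`. As `⟨y⟩' ≤ C |η| ≤ C' F'`, the escape `⟨y⟩ → ∞` forces `F → ∞`. As also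
`F ≤ Λ ⟨y⟩`, it follows that `|η'| / |η| ≤ K F^{-μ-1} F'`, the derivative of a function with a limit
at infinity. Hence `log |η|` is bounded and `η` converges to a nonzero limit `ξ`
(`momentum_tendsto`, `forward_asymptotics`). Then `y' → v(ξ)`, so `y / t → v(ξ)`, and the statement
on directions follows by continuity (`hamilton_forward`).
-/

open MeasureTheory Filter Topology

noncomputable section

/-- Euclidean norm of `x ∈ ℝⁿ`. -/
def nrm {n : ℕ} (x : Fin n → ℝ) : ℝ := Real.sqrt (∑ j, x j ^ 2)

/-- Japanese bracket `⟨x⟩ = (1 + |x|²)^{1/2}`. -/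
def jap {n : ℕ} (x : Fin n → ℝ) : ℝ := Real.sqrt (1 + ∑ j, x j ^ 2)

/-- Japanese bracket of a real number. -/
def japR (t : ℝ) : ℝ := Real.sqrt (1 + t ^ 2)

/-- Euclidean inner product on `ℝⁿ`. -/
def dotp {n : ℕ} (x y : Fin n → ℝ) : ℝ := ∑ j, x j * y j

/-- Partial derivative in the `j`-th coordinate direction. -/
def pd {n : ℕ} {F : Type} [NormedAddCommGroup F] [NormedSpace ℝ F]
    (j : Fin n) (f : (Fin n → ℝ) → F) (x : Fin n → ℝ) : F :=
  fderiv ℝ f x (Pi.single j 1)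

/-- Iterated partial derivatives along a list of coordinate indices
(encoding a multi-index). -/
def pdL {n : ℕ} {F : Type} [NormedAddCommGroup F] [NormedSpace ℝ F] :
    List (Fin n) → ((Fin n → ℝ) → F) → (Fin n → ℝ) → F
  | [], f => f
  | j :: L, f => pd j (pdL L f)

/-- `D_j = -i ∂_j`. -/
def Dop {n : ℕ} (j : Fin n) (φ : (Fin n → ℝ) → ℂ) (x : Fin n → ℝ) : ℂ :=
  -Complex.I * pd j φ x

/-- The Klein-Gordon type operator
`Pφ = Σ_{j,k} D_j(g^{jk} D_k φ) + (1/2) Σ_j (D_j(u_j φ) + u_j D_j φ) + u_0 φ`. -/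
def Pop {n : ℕ} (g : Fin n → Fin n → (Fin n → ℝ) → ℝ)
    (u : Fin (n + 1) → (Fin n → ℝ) → ℝ) (φ : (Fin n → ℝ) → ℂ) (x : Fin n → ℝ) : ℂ :=
  (∑ j, ∑ k, Dop j (fun y => (g j k y : ℂ) * Dop k φ y) x)
    + (1 / 2) * (∑ j, (Dop j (fun y => (u j.succ y : ℂ) * φ y) x
        + (u j.succ x : ℂ) * Dop j φ x))
    + (u 0 x : ℂ) * φ x

/-- The principal symbol `p₂(x,ξ) = Σ g^{jk}(x) ξ_j ξ_k`. -/
def p2 {n : ℕ} (g : Fin n → Fin n → (Fin n → ℝ) → ℝ) (x ξ : Fin n → ℝ) : ℝ :=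
  ∑ j, ∑ k, g j k x * ξ j * ξ k

/-- `v(ξ) = ∂_ξ p₀(ξ) = 2 g₀ ξ` for the constant cometric `g₀`. -/
def vv {n : ℕ} (g₀ : Fin n → Fin n → ℝ) (ξ : Fin n → ℝ) : Fin n → ℝ :=
  fun j => 2 * ∑ k, g₀ j k * ξ k

/-- `v̂(ξ) = v(ξ)/|v(ξ)|`. -/
def vhat {n : ℕ} (g₀ : Fin n → Fin n → ℝ) (ξ : Fin n → ℝ) : Fin n → ℝ :=
  (nrm (vv g₀ ξ))⁻¹ • vv g₀ ξ

/-- `β(x,ξ) = x̂ · v̂(ξ)`. -/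
def betaF {n : ℕ} (g₀ : Fin n → Fin n → ℝ) (x ξ : Fin n → ℝ) : ℝ :=
  dotp ((nrm x)⁻¹ • x) (vhat g₀ ξ)

/-- `x^⊥_ξ = x − (x·v̂(ξ)) v̂(ξ)`. -/
def perpx {n : ℕ} (g₀ : Fin n → Fin n → ℝ) (x ξ : Fin n → ℝ) : Fin n → ℝ :=
  x - dotp x (vhat g₀ ξ) • vhat g₀ ξ

/-- `τ(x,ξ) = c₀ √(|x|² − (x·v̂(ξ))²) − x·v̂(ξ)`. -/
def tauF {n : ℕ} (g₀ : Fin n → Fin n → ℝ) (c₀ : ℝ) (x ξ : Fin n → ℝ) : ℝ :=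
  c₀ * Real.sqrt (nrm x ^ 2 - dotp x (vhat g₀ ξ) ^ 2) - dotp x (vhat g₀ ξ)

/-- Partial derivative of a symbol in the `j`-th `x`-direction. -/
def pdx {n : ℕ} (j : Fin n) (a : (Fin n → ℝ) → (Fin n → ℝ) → ℝ) :
    (Fin n → ℝ) → (Fin n → ℝ) → ℝ :=
  fun x ξ => fderiv ℝ (fun y => a y ξ) x (Pi.single j 1)

/-- Partial derivative of a symbol in the `j`-th `ξ`-direction. -/
def pdxi {n : ℕ} (j : Fin n) (a : (Fin n → ℝ) → (Fin n → ℝ) → ℝ) :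
    (Fin n → ℝ) → (Fin n → ℝ) → ℝ :=
  fun x ξ => fderiv ℝ (fun ζ => a x ζ) ξ (Pi.single j 1)

/-- Iterated `x`-derivatives of a symbol. -/
def pdxL {n : ℕ} : List (Fin n) → ((Fin n → ℝ) → (Fin n → ℝ) → ℝ) →
    (Fin n → ℝ) → (Fin n → ℝ) → ℝ
  | [], a => a
  | j :: L, a => pdx j (pdxL L a)

/-- Iterated `ξ`-derivatives of a symbol. -/
def pdxiL {n : ℕ} : List (Fin n) → ((Fin n → ℝ) → (Fin n → ℝ) → ℝ) →
    (Fin n → ℝ) → (Fin n → ℝ) → ℝ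
  | [], a => a
  | j :: L, a => pdxi j (pdxiL L a)

/-- Poisson bracket `{a,b} = ∂_ξ a · ∂_x b − ∂_x a · ∂_ξ b`. -/
def PB {n : ℕ} (a b : (Fin n → ℝ) → (Fin n → ℝ) → ℝ) :
    (Fin n → ℝ) → (Fin n → ℝ) → ℝ :=
  fun x ξ => ∑ j, (pdxi j a x ξ * pdx j b x ξ - pdx j a x ξ * pdxi j b x ξ)

/-- The symbol class `S^{k,ℓ} = S(⟨x⟩^ℓ⟨ξ⟩^k, dx²/⟨x⟩² + dξ²/⟨ξ⟩²)`. -/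
def SymClass {n : ℕ} (k ℓ : ℝ) (a : (Fin n → ℝ) → (Fin n → ℝ) → ℝ) : Prop :=
  ContDiff ℝ (⊤ : ℕ∞) (fun p : (Fin n → ℝ) × (Fin n → ℝ) => a p.1 p.2) ∧
  ∀ Lx Lξ : List (Fin n), ∃ C > 0, ∀ x ξ,
    |pdxL Lx (pdxiL Lξ a) x ξ| ≤
      C * jap x ^ (ℓ - (Lx.length : ℝ)) * jap ξ ^ (k - (Lξ.length : ℝ))

/-- The incoming region `Γ₋(δ,σ,R)`. -/
def Gm {n : ℕ} (g₀ : Fin n → Fin n → ℝ) (δ σ R : ℝ) :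
    Set ((Fin n → ℝ) × (Fin n → ℝ)) :=
  {p | 1 - δ ≤ nrm p.2 ^ 2 ∧ nrm p.2 ^ 2 ≤ 1 + δ ∧ betaF g₀ p.1 p.2 ≤ σ ∧ R ≤ nrm p.1}

/-- The outgoing region `Γ₊(δ,σ,R)`. -/
def Gp {n : ℕ} (g₀ : Fin n → Fin n → ℝ) (δ σ R : ℝ) :
    Set ((Fin n → ℝ) × (Fin n → ℝ)) :=
  {p | 1 - δ ≤ nrm p.2 ^ 2 ∧ nrm p.2 ^ 2 ≤ 1 + δ ∧ σ ≤ betaF g₀ p.1 p.2 ∧ R ≤ nrm p.1}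

/-- Assumption A for the top-order coefficients `g^{jk}`: smooth, real-valued,
symmetric, everywhere nondegenerate, asymptotically flat with rate `⟨x⟩^{-μ-|α|}`
towards a constant nondegenerate symmetric matrix `g₀`. -/
structure AssumpG {n : ℕ} (g : Fin n → Fin n → (Fin n → ℝ) → ℝ)
    (g₀ : Fin n → Fin n → ℝ) (μ : ℝ) : Prop where
  smooth : ∀ j k, ContDiff ℝ (⊤ : ℕ∞) (g j k)
  symm : ∀ j k x, g j k x = g k j x
  nondeg : ∀ x (ξ : Fin n → ℝ), (∀ j, ∑ k, g j k x * ξ k = 0) → ξ = 0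
  symm0 : ∀ j k, g₀ j k = g₀ k j
  nondeg0 : ∀ ξ : Fin n → ℝ, (∀ j, ∑ k, g₀ j k * ξ k = 0) → ξ = 0
  decay : ∀ L : List (Fin n), ∃ C > 0, ∀ j k x,
    |pdL L (fun y => g j k y - g₀ j k) x| ≤ C * jap x ^ (-μ - (L.length : ℝ))

/-- Assumption A for the lower-order coefficients `u_j`, `j = 0,…,n`:
smooth, real-valued, with symbol-type decay `⟨x⟩^{-μ-|α|}`. -/
structure AssumpU {n : ℕ} (u : Fin (n + 1) → (Fin n → ℝ) → ℝ) (μ : ℝ) : Prop where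
  smooth : ∀ j, ContDiff ℝ (⊤ : ℕ∞) (u j)
  decay : ∀ L : List (Fin n), ∃ C > 0, ∀ j x,
    |pdL L (u j) x| ≤ C * jap x ^ (-μ - (L.length : ℝ))

/-- `∂_ξ p₂(x,ξ)` (the `x`-component of the Hamilton vector field). -/
def HamX {n : ℕ} (g : Fin n → Fin n → (Fin n → ℝ) → ℝ) (x ξ : Fin n → ℝ) :
    Fin n → ℝ :=
  fun j => fderiv ℝ (fun ζ => p2 g x ζ) ξ (Pi.single j 1)

/-- `−∂_x p₂(x,ξ)` (the `ξ`-component of the Hamilton vector field). -/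
def HamXi {n : ℕ} (g : Fin n → Fin n → (Fin n → ℝ) → ℝ) (x ξ : Fin n → ℝ) :
    Fin n → ℝ :=
  fun j => -(fderiv ℝ (fun y => p2 g y ξ) x (Pi.single j 1))

/-- Assumption B (null non-trapping): every null bicharacteristic with `ξ₀ ≠ 0`
is global and escapes to spatial infinity in both time directions. -/
def AssumptionB {n : ℕ} (g : Fin n → Fin n → (Fin n → ℝ) → ℝ) : Prop :=
  ∀ x₀ ξ₀ : Fin n → ℝ, p2 g x₀ ξ₀ = 0 → ξ₀ ≠ 0 →
    ∃ y η : ℝ → (Fin n → ℝ), y 0 = x₀ ∧ η 0 = ξ₀ ∧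
      (∀ t, HasDerivAt y (HamX g (y t) (η t)) t) ∧
      (∀ t, HasDerivAt η (HamXi g (y t) (η t)) t) ∧
      Tendsto (fun t => nrm (y t)) atTop atTop ∧
      Tendsto (fun t => nrm (y t)) atBot atTop

/-- A test function: smooth and compactly supported. -/
def IsTest {n : ℕ} (φ : (Fin n → ℝ) → ℂ) : Prop :=
  ContDiff ℝ (⊤ : ℕ∞) φ ∧ HasCompactSupport φ

end

/-! ### Asymptotics of perturbed free motion -/

/-- If `‖η'‖ ≤ -h' ‖η‖` with `h` decreasing to `0`, then `log ‖η‖²` stays bounded, because its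
derivative is at most `-2 h'` in absolute value; hence `η` is Cauchy at `+∞` and its limit is
nonzero. -/
lemma momentum_tendsto {E : Type*} [NormedAddCommGroup E] [InnerProductSpace ℝ E]
    [CompleteSpace E] {η η' : ℝ → E} {h h' : ℝ → ℝ} {T : ℝ}
    (hη : ∀ t, HasDerivAt η (η' t) t) (hne : ∀ t, η t ≠ 0)
    (hh : ∀ t, T ≤ t → HasDerivAt h (h' t) t) (hpos : ∀ t, T ≤ t → 0 ≤ h t)
    (hlim : Tendsto h atTop (𝓝 0))
    (hbound : ∀ t, T ≤ t → ‖η' t‖ ≤ -h' t * ‖η t‖) :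
    ∃ ξ : E, ξ ≠ 0 ∧ Tendsto η atTop (𝓝 ξ) := by
  have hNpos : ∀ t, 0 < ‖η t‖ := fun t => norm_pos_iff.2 (hne t)
  set u : ℝ → ℝ := fun t => Real.log (‖η t‖ ^ 2) with hu
  have hud : ∀ t, HasDerivAt u (2 * inner ℝ (η t) (η' t) / ‖η t‖ ^ 2) t := fun t =>
    (hη t).norm_sq.log (pow_ne_zero 2 (hNpos t).ne')
  have hub : ∀ t, T ≤ t → |2 * inner ℝ (η t) (η' t) / ‖η t‖ ^ 2| ≤ -(2 * h' t) := by
    intro t ht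
    have h1 := abs_real_inner_le_norm (η t) (η' t)
    have h2 := hbound t ht
    rw [abs_div, abs_mul, abs_two, abs_of_pos (pow_pos (hNpos t) 2),
      div_le_iff₀ (pow_pos (hNpos t) 2)]
    nlinarith [mul_le_mul_of_nonneg_left h2 (hNpos t).le]
  have hanti : AntitoneOn (fun t => u t + 2 * h t) (Set.Ici T) := by
    refine antitoneOn_of_hasDerivWithinAt_nonpos (convex_Ici T)
      (f' := fun t => 2 * inner ℝ (η t) (η' t) / ‖η t‖ ^ 2 + 2 * h' t)
      (fun t ht => ((hud t).add ((hh t ht).const_mul 2)).continuousAt.continuousWithinAt)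
      (fun t ht => ((hud t).add ((hh t (interior_subset ht)).const_mul 2)).hasDerivWithinAt) ?_
    intro t ht
    have := (abs_le.1 (hub t (interior_subset ht))).2
    linarith
  have hmono : MonotoneOn (fun t => u t - 2 * h t) (Set.Ici T) := by
    refine monotoneOn_of_hasDerivWithinAt_nonneg (convex_Ici T)
      (f' := fun t => 2 * inner ℝ (η t) (η' t) / ‖η t‖ ^ 2 - 2 * h' t)
      (fun t ht => ((hud t).sub ((hh t ht).const_mul 2)).continuousAt.continuousWithinAt)
      (fun t ht => ((hud t).sub ((hh t (interior_subset ht)).const_mul 2)).hasDerivWithinAt) ?_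
    intro t ht
    have := (abs_le.1 (hub t (interior_subset ht))).1
    linarith
  set a : ℝ := Real.exp (u T + 2 * h T)
  set b : ℝ := Real.exp (u T - 2 * h T)
  have hupper : ∀ t, T ≤ t → ‖η t‖ ^ 2 ≤ a := by
    intro t ht
    rw [← Real.log_le_iff_le_exp (pow_pos (hNpos t) 2)]
    have h1 : u t + 2 * h t ≤ u T + 2 * h T := hanti Set.self_mem_Ici ht ht
    have := hpos t ht
    change u t ≤ _
    linarith
  have hlower : ∀ t, T ≤ t → b ≤ ‖η t‖ ^ 2 := by
    intro t ht
    rw [← Real.le_log_iff_exp_le (pow_pos (hNpos t) 2)]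
    have h1 : u T - 2 * h T ≤ u t - 2 * h t := hmono Set.self_mem_Ici ht ht
    have := hpos t ht
    change _ ≤ u t
    linarith
  set M : ℝ := Real.sqrt a
  have hM : ∀ t, T ≤ t → ‖η t‖ ≤ M := fun t ht => Real.le_sqrt_of_sq_le (hupper t ht)
  have hh'neg : ∀ t, T ≤ t → 0 ≤ -h' t := fun t ht => by
    have := (norm_nonneg _).trans (hbound t ht)
    exact nonneg_of_mul_nonneg_left this (hNpos t)
  have hdist : ∀ s t, T ≤ s → s ≤ t → ‖η t - η s‖ ≤ M * h s := by
    intro s t hs hst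
    have key := image_norm_le_of_norm_deriv_right_le_deriv_boundary' (a := s) (b := t)
      (f := fun r => η r - η s) (f' := η') (B := fun r => M * (h s - h r))
      (B' := fun r => M * (0 - h' r))
      (fun r _ => ((hη r).sub_const _).continuousAt.continuousWithinAt)
      (fun r _ => ((hη r).sub_const _).hasDerivWithinAt) (by simp)
      (fun r hr => (((hasDerivAt_const r (h s)).sub (hh r (hs.trans hr.1))).const_mul
        M).continuousAt.continuousWithinAt)
      (fun r hr => (((hasDerivAt_const r (h s)).sub (hh r (hs.trans hr.1))).const_mul
        M).hasDerivWithinAt)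
      (fun r hr => by
        have hr' := hs.trans hr.1
        nlinarith [hbound r hr', hM r hr', hh'neg r hr',
          mul_le_mul_of_nonneg_left (hM r hr') (hh'neg r hr')])
      (Set.right_mem_Icc.2 hst)
    have := mul_nonneg (Real.sqrt_nonneg a) (hpos t (hs.trans hst))
    have key' : ‖η t - η s‖ ≤ M * (h s - h t) := key
    nlinarith
  have hmax : Tendsto (fun t : ℝ => max t T) atTop atTop :=
    tendsto_atTop_mono (fun t => le_max_left t T) tendsto_id
  have hcauchy : CauchySeq (fun t : ℝ => η (max t T)) := by
    refine cauchySeq_of_le_tendsto_0' (fun t => M * h (max t T)) (fun s t hst => ?_) ?_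
    · rw [dist_comm, dist_eq_norm]
      exact hdist _ _ (le_max_right _ _) (max_le_max_right _ hst)
    · simpa using (hlim.comp hmax).const_mul M
  obtain ⟨ξ, hξ⟩ := cauchySeq_tendsto_of_complete hcauchy
  have hev : (fun t : ℝ => η (max t T)) =ᶠ[atTop] η := by
    filter_upwards [eventually_ge_atTop T] with t ht
    rw [max_eq_left ht]
  have hξ' := hξ.congr' hev
  refine ⟨ξ, ?_, hξ'⟩
  rintro rfl
  have h1 : Tendsto (fun t => ‖η t‖ ^ 2) atTop (𝓝 0) := by simpa using (hξ'.norm.pow 2)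
  have h2 : b ≤ 0 := ge_of_tendsto h1 ((eventually_ge_atTop T).mono hlower)
  exact absurd (Real.exp_pos _) (not_lt.2 h2)

/-- A curve whose velocity converges to `w` has mean velocity converging to `w`. -/
lemma tendsto_inv_smul_of_deriv {E : Type*} [NormedAddCommGroup E] [NormedSpace ℝ E]
    {y y' : ℝ → E} {w : E} (hy : ∀ t, HasDerivAt y (y' t) t) (hlim : Tendsto y' atTop (𝓝 w)) :
    Tendsto (fun t : ℝ => t⁻¹ • y t) atTop (𝓝 w) := by
  rw [Metric.tendsto_atTop]
  intro ε hε
  obtain ⟨T, hT⟩ := (Metric.tendsto_atTop.1 hlim) (ε / 2) (by positivity)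
  have hd : ∀ t, HasDerivAt (fun s => y s - s • w) (y' t - w) t := fun t => by
    simpa using! (hy t).sub ((hasDerivAt_id t).smul_const w)
  set T₁ := max T 1
  set D := ‖y T₁ - T₁ • w‖
  have hT1 : 1 ≤ T₁ := le_max_right _ _
  have hbd : ∀ t, T₁ ≤ t → ‖y t - t • w‖ ≤ D + ε / 2 * (t - T₁) := by
    intro t ht
    have := norm_image_sub_le_of_norm_deriv_le_segment' (a := T₁) (b := t) (C := ε / 2)
      (fun x _ => (hd x).hasDerivWithinAt)
      (fun x hx => by
        rw [← dist_eq_norm]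
        exact (hT x ((le_max_left _ _).trans hx.1)).le) t (Set.right_mem_Icc.2 ht)
    have h3 := norm_le_norm_add_norm_sub' (y t - t • w) (y T₁ - T₁ • w)
    linarith
  refine ⟨max T₁ (2 * D / ε + 1), fun t ht => ?_⟩
  have ht1 : T₁ ≤ t := (le_max_left _ _).trans ht
  have htpos : 0 < t := by linarith
  have ht2 : 2 * D / ε < t := by linarith [(le_max_right _ _).trans ht]
  rw [div_lt_iff₀ hε] at ht2
  have heq : t⁻¹ • y t - w = t⁻¹ • (y t - t • w) := by
    rw [smul_sub, smul_smul, inv_mul_cancel₀ htpos.ne', one_smul]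
  rw [dist_eq_norm, heq, norm_smul, norm_inv, Real.norm_of_nonneg htpos.le,
    inv_mul_lt_iff₀ htpos]
  have := hbd t ht1
  nlinarith

/-- Forward asymptotics for a perturbation `y' ≈ L η`, `η' ≈ 0` of free motion, with errors that
decay in `⟨y⟩` as for an asymptotically flat quadratic Hamiltonian. No a priori bound on `η` is
assumed: the virial function `F = ⟨y, L η⟩ / ‖η‖` supplies it. -/
lemma forward_asymptotics {E : Type*} [NormedAddCommGroup E] [InnerProductSpace ℝ E]
    [CompleteSpace E] (L : E →L[ℝ] E) {c C μ : ℝ} (hc : 0 < c) (hC : 0 < C) (hμ : 0 < μ)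
    (hL : ∀ ξ, c * ‖ξ‖ ≤ ‖L ξ‖) {y y' η η' : ℝ → E}
    (hy : ∀ t, HasDerivAt y (y' t) t) (hη : ∀ t, HasDerivAt η (η' t) t)
    (hne : ∀ t, η t ≠ 0) (hesc : Tendsto (fun t => ‖y t‖) atTop atTop)
    (hyb : ∀ t, ‖y' t - L (η t)‖ ≤ C * Real.sqrt (1 + ‖y t‖ ^ 2) ^ (-μ) * ‖η t‖)
    (hηb : ∀ t, ‖η' t‖ ≤ C * Real.sqrt (1 + ‖y t‖ ^ 2) ^ (-μ - 1) * ‖η t‖ ^ 2) :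
    ∃ ξ : E, ξ ≠ 0 ∧ Tendsto η atTop (𝓝 ξ) ∧
      Tendsto (fun t : ℝ => t⁻¹ • y t) atTop (𝓝 (L ξ)) := by
  set N : ℝ → ℝ := fun t => ‖η t‖ with hN
  have hNpos : ∀ t, 0 < N t := fun t => norm_pos_iff.2 (hne t)
  set ρ : ℝ → ℝ := fun t => Real.sqrt (1 + ‖y t‖ ^ 2) with hρ
  have hρsq : ∀ t, ρ t ^ 2 = 1 + ‖y t‖ ^ 2 := fun t => Real.sq_sqrt (by positivity)
  have hρ1 : ∀ t, 1 ≤ ρ t := fun t => Real.one_le_sqrt.2 (by nlinarith [sq_nonneg ‖y t‖])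
  have hρpos : ∀ t, 0 < ρ t := fun t => one_pos.trans_le (hρ1 t)
  have hyρ : ∀ t, ‖y t‖ ≤ ρ t := fun t => Real.le_sqrt_of_sq_le (by linarith)
  have hρtop : Tendsto ρ atTop atTop := tendsto_atTop_mono hyρ hesc
  have hdecay : Tendsto (fun t => ρ t ^ (-μ)) atTop (𝓝 0) :=
    (tendsto_rpow_neg_atTop hμ).comp hρtop
  have hρμ1 : ∀ t, ρ t ^ (-μ) ≤ 1 := fun t =>
    Real.rpow_le_one_of_one_le_of_nonpos (hρ1 t) (by linarith)
  have hρμ0 : ∀ t, 0 < ρ t ^ (-μ) := fun t => Real.rpow_pos_of_pos (hρpos t) _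
  have hρmul : ∀ t, ρ t * ρ t ^ (-μ - 1) = ρ t ^ (-μ) := fun t => by
    rw [Real.rpow_sub_one (hρpos t).ne']
    field_simp [(hρpos t).ne']
  set Λ : ℝ := ‖L‖ + 1 with hΛ
  have hΛpos : 0 < Λ := by positivity
  have hLΛ : ∀ ξ, ‖L ξ‖ ≤ Λ * ‖ξ‖ := fun ξ =>
    (L.le_opNorm ξ).trans (by nlinarith [norm_nonneg ξ])
  have hNd : ∀ t, HasDerivAt N (inner ℝ (η t) (η' t) / N t) t := by
    intro t
    have h1 := (hη t).norm_sq.sqrt (pow_ne_zero 2 (hNpos t).ne')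
    simp only [Real.sqrt_sq (norm_nonneg _)] at h1
    convert h1 using 1
    simp only [hN]
    field_simp
  have hρd : ∀ t, HasDerivAt ρ (inner ℝ (y t) (y' t) / ρ t) t := by
    intro t
    have h1 := ((hy t).norm_sq.const_add 1).sqrt (by positivity)
    convert h1 using 1
    simp only [hρ]
    field_simp
  -- The virial function, whose growth controls the Euclidean arclength of the trajectory.
  set F : ℝ → ℝ := fun t => inner ℝ (y t) (L (η t)) / N t with hF
  set F' : ℝ → ℝ := fun t =>
    ((inner ℝ (y t) (L (η' t)) + inner ℝ (y' t) (L (η t))) * N t -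
      inner ℝ (y t) (L (η t)) * (inner ℝ (η t) (η' t) / N t)) / N t ^ 2 with hF'
  have hFd : ∀ t, HasDerivAt F (F' t) t := fun t =>
    ((hy t).inner ℝ (L.hasFDerivAt.comp_hasDerivAt t (hη t))).div (hNd t) (hNpos t).ne'
  -- The main term is `⟨L η, L η⟩ / ‖η‖ ≥ c² ‖η‖`; each of the three errors is at most
  -- `C Λ ρ^{-μ} ‖η‖`.
  have hF'lower : ∀ t, N t * (c ^ 2 - 3 * C * Λ * ρ t ^ (-μ)) ≤ F' t := by
    intro t
    have n0 := hNpos t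
    have r0 := hρpos t
    have e0 := hρμ0 t
    have hη't : ‖η' t‖ * ρ t ≤ C * ρ t ^ (-μ) * N t ^ 2 := by
      have := mul_le_mul_of_nonneg_right (hηb t) r0.le
      calc _ ≤ _ := this
        _ = C * (ρ t * ρ t ^ (-μ - 1)) * N t ^ 2 := by simp only [hρ, hN]; ring
        _ = _ := by rw [hρmul]
    have b1 : |inner ℝ (y t) (L (η' t))| ≤ Λ * (C * ρ t ^ (-μ) * N t ^ 2) := by
      refine (abs_real_inner_le_norm _ _).trans ?_
      calc ‖y t‖ * ‖L (η' t)‖ ≤ ρ t * (Λ * ‖η' t‖) :=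
            mul_le_mul (hyρ t) (hLΛ _) (norm_nonneg _) r0.le
        _ = Λ * (‖η' t‖ * ρ t) := by ring
        _ ≤ _ := mul_le_mul_of_nonneg_left hη't hΛpos.le
    have b2 : c ^ 2 * N t ^ 2 - Λ * (C * ρ t ^ (-μ) * N t ^ 2) ≤ inner ℝ (y' t) (L (η t)) := by
      have e1 : inner ℝ (y' t) (L (η t)) =
          ‖L (η t)‖ ^ 2 + inner ℝ (y' t - L (η t)) (L (η t)) := by
        rw [inner_sub_left, real_inner_self_eq_norm_sq]; ring
      have e2 : |inner ℝ (y' t - L (η t)) (L (η t))| ≤ Λ * (C * ρ t ^ (-μ) * N t ^ 2) := by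
        refine (abs_real_inner_le_norm _ _).trans ?_
        calc _ ≤ (C * ρ t ^ (-μ) * N t) * (Λ * N t) :=
              mul_le_mul (hyb t) (hLΛ _) (norm_nonneg _) (by positivity)
          _ = _ := by ring
      have e3 : (c * N t) ^ 2 ≤ ‖L (η t)‖ ^ 2 := by
        have := hL (η t)
        gcongr
      have := (abs_le.1 e2).1
      rw [e1]; nlinarith
    have b3 : |inner ℝ (y t) (L (η t)) * (inner ℝ (η t) (η' t) / N t)| ≤
        Λ * (C * ρ t ^ (-μ) * N t ^ 2) * N t := by
      have e1 : |inner ℝ (y t) (L (η t))| ≤ ρ t * (Λ * N t) :=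
        (abs_real_inner_le_norm _ _).trans
          (mul_le_mul (hyρ t) (hLΛ _) (norm_nonneg _) r0.le)
      have e2 : |inner ℝ (η t) (η' t) / N t| ≤ ‖η' t‖ := by
        rw [abs_div, abs_of_pos n0, div_le_iff₀ n0, mul_comm]
        exact abs_real_inner_le_norm _ _
      rw [abs_mul]
      calc _ ≤ ρ t * (Λ * N t) * ‖η' t‖ := mul_le_mul e1 e2 (abs_nonneg _) (by positivity)
        _ = Λ * N t * (‖η' t‖ * ρ t) := by ring
        _ ≤ Λ * N t * (C * ρ t ^ (-μ) * N t ^ 2) :=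
            mul_le_mul_of_nonneg_left hη't (by positivity)
        _ = _ := by ring
    rw [hF', le_div_iff₀ (by positivity)]
    have b1' := mul_le_mul_of_nonneg_right (abs_le.1 b1).1 n0.le
    have b2' := mul_le_mul_of_nonneg_right b2 n0.le
    have b3' := (abs_le.1 b3).2
    nlinarith
  obtain ⟨T₀, hT₀⟩ : ∃ T₀, ∀ t, T₀ ≤ t → c ^ 2 / 2 * N t ≤ F' t := by
    have h1 : Tendsto (fun t => 3 * C * Λ * ρ t ^ (-μ)) atTop (𝓝 0) := by
      simpa using hdecay.const_mul (3 * C * Λ)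
    have h2 := h1.eventually_lt_const (show (0 : ℝ) < c ^ 2 / 2 by positivity)
    obtain ⟨T₀, hT₀⟩ := eventually_atTop.1 h2
    refine ⟨T₀, fun t ht => le_trans ?_ (hF'lower t)⟩
    have := hT₀ t ht
    nlinarith [hNpos t]
  have hy'b : ∀ t, ‖y' t‖ ≤ (Λ + C) * N t := by
    intro t
    have h1 : C * ρ t ^ (-μ) * N t ≤ C * N t :=
      mul_le_mul_of_nonneg_right (mul_le_of_le_one_right hC.le (hρμ1 t)) (hNpos t).le
    have h2 := norm_le_norm_add_norm_sub' (y' t) (L (η t))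
    have h3 := hyb t
    have h4 := hLΛ (η t)
    change _ ≤ C * ρ t ^ (-μ) * N t at h3
    change _ ≤ Λ * N t at h4
    linarith
  have hρ'b : ∀ t, inner ℝ (y t) (y' t) / ρ t ≤ (Λ + C) * N t := by
    intro t
    rw [div_le_iff₀ (hρpos t)]
    have h1 := (le_abs_self _).trans (abs_real_inner_le_norm (y t) (y' t))
    have h2 := mul_le_mul (hyρ t) (hy'b t) (norm_nonneg _) (hρpos t).le
    linarith
  -- `ρ` grows no faster than a multiple of `F`, so `F` inherits the escape to infinity.
  set κ : ℝ := 2 * (Λ + C) / c ^ 2 with hκ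
  have hκpos : 0 < κ := by positivity
  have hκF : ∀ t, T₀ ≤ t → (Λ + C) * N t ≤ κ * F' t := by
    intro t ht
    have := mul_le_mul_of_nonneg_left (hT₀ t ht) hκpos.le
    have e : κ * (c ^ 2 / 2 * N t) = (Λ + C) * N t := by rw [hκ]; field_simp
    linarith
  have hanti : AntitoneOn (fun t => ρ t - κ * F t) (Set.Ici T₀) := by
    refine antitoneOn_of_hasDerivWithinAt_nonpos (convex_Ici T₀)
      (f' := fun t => inner ℝ (y t) (y' t) / ρ t - κ * F' t)
      (fun t _ => ((hρd t).sub ((hFd t).const_mul κ)).continuousAt.continuousWithinAt)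
      (fun t _ => ((hρd t).sub ((hFd t).const_mul κ)).hasDerivWithinAt) ?_
    intro t ht
    have := hκF t (interior_subset ht)
    linarith [hρ'b t]
  have hFtop : Tendsto F atTop atTop := by
    have h1 : Tendsto (fun t => κ⁻¹ * (ρ t - (ρ T₀ - κ * F T₀))) atTop atTop :=
      (tendsto_atTop_add_const_right _ _ hρtop).const_mul_atTop (inv_pos.2 hκpos)
    refine tendsto_atTop_mono' _ ?_ h1
    filter_upwards [eventually_ge_atTop T₀] with t ht
    have h2 : ρ t - κ * F t ≤ ρ T₀ - κ * F T₀ := hanti Set.self_mem_Ici ht ht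
    rw [inv_mul_le_iff₀ hκpos]
    linarith
  obtain ⟨T₁, hT₁⟩ := eventually_atTop.1 (hFtop.eventually_ge_atTop 1)
  set T := max T₀ T₁
  have hFpos : ∀ t, T ≤ t → 0 < F t := fun t ht =>
    one_pos.trans_le (hT₁ t ((le_max_right _ _).trans ht))
  have hFρ : ∀ t, F t ≤ Λ * ρ t := by
    intro t
    rw [hF, div_le_iff₀ (hNpos t)]
    have h1 := (le_abs_self _).trans (abs_real_inner_le_norm (y t) (L (η t)))
    have h2 := mul_le_mul (hyρ t) (hLΛ (η t)) (norm_nonneg _) (hρpos t).le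
    change _ ≤ ρ t * (Λ * N t) at h2
    linarith
  -- Since `‖η‖ ≤ (2 / c²) F'` and `F ≤ Λ ρ`, the relative size of `η'` is at most
  -- `K F^{-μ-1} F' = -h'` with `h = (K / μ) F^{-μ}`.
  set K : ℝ := C * Λ ^ (μ + 1) * (2 / c ^ 2) with hK
  have hKpos : 0 < K := by positivity
  obtain ⟨ξ, hξ0, hξ⟩ := momentum_tendsto (T := T) (h := fun t => K / μ * F t ^ (-μ))
    (h' := fun t => K / μ * (F' t * (-μ) * F t ^ (-μ - 1))) hη hne
    (fun t ht => ((hFd t).rpow_const (Or.inl (hFpos t ht).ne')).const_mul _)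
    (fun t ht => by have := hFpos t ht; positivity)
    (by simpa using ((tendsto_rpow_neg_atTop hμ).comp hFtop).const_mul (K / μ))
    (by
      intro t ht
      have f0 := hFpos t ht
      have n0 := hNpos t
      have h1 : ρ t ^ (-μ - 1) ≤ Λ ^ (μ + 1) * F t ^ (-μ - 1) := by
        have h2 : (Λ * ρ t) ^ (-μ - 1) ≤ F t ^ (-μ - 1) :=
          Real.rpow_le_rpow_of_nonpos f0 (hFρ t) (by linarith)
        rw [Real.mul_rpow hΛpos.le (hρpos t).le] at h2
        have h3 := mul_le_mul_of_nonneg_left h2 (Real.rpow_nonneg hΛpos.le (μ + 1))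
        rw [← mul_assoc, ← Real.rpow_add hΛpos] at h3
        simpa using h3
      have h4 : N t ≤ 2 / c ^ 2 * F' t := by
        have := mul_le_mul_of_nonneg_left (hT₀ t ((le_max_left _ _).trans ht))
          (show (0 : ℝ) ≤ 2 / c ^ 2 by positivity)
        have e : 2 / c ^ 2 * (c ^ 2 / 2 * N t) = N t := by field_simp
        linarith
      have p0 := Real.rpow_pos_of_pos f0 (-μ - 1)
      calc ‖η' t‖ ≤ C * ρ t ^ (-μ - 1) * N t ^ 2 := hηb t
        _ ≤ C * (Λ ^ (μ + 1) * F t ^ (-μ - 1)) * N t ^ 2 := by gcongr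
        _ = C * (Λ ^ (μ + 1) * F t ^ (-μ - 1)) * N t * N t := by ring
        _ ≤ C * (Λ ^ (μ + 1) * F t ^ (-μ - 1)) * (2 / c ^ 2 * F' t) * N t := by gcongr
        _ = -(K / μ * (F' t * (-μ) * F t ^ (-μ - 1))) * ‖η t‖ := by
          rw [hK]; simp only [hN]; field_simp)
  refine ⟨ξ, hξ0, hξ, tendsto_inv_smul_of_deriv hy ?_⟩
  have h1 : Tendsto (fun t => L (η t)) atTop (𝓝 (L ξ)) := (L.continuous.tendsto ξ).comp hξ
  have h2 : Tendsto (fun t => y' t - L (η t)) atTop (𝓝 0) := by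
    refine squeeze_zero_norm hyb ?_
    simpa using (hdecay.const_mul C).mul hξ.norm
  simpa using h2.add h1

/-! ### Uniqueness of trajectories -/

/-- Global uniqueness for an autonomous `C¹` vector field, from the Lipschitz bound on the compact
set swept out by the two solutions over a bounded time interval. -/
lemma autonomous_unique {E : Type*} [NormedAddCommGroup E] [NormedSpace ℝ E]
    [FiniteDimensional ℝ E] {v : E → E} (hv : ContDiff ℝ 1 v) {f g : ℝ → E} {t₀ : ℝ}
    (hf : ∀ t, HasDerivAt f (v (f t)) t) (hg : ∀ t, HasDerivAt g (v (g t)) t)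
    (heq : f t₀ = g t₀) : f = g := by
  ext t
  obtain ⟨A, B, Ht, Ht₀⟩ : ∃ A B, t ∈ Set.Ioo A B ∧ t₀ ∈ Set.Ioo A B :=
    ⟨min t t₀ - 1, max t t₀ + 1, by grind, by grind⟩
  have hfc : Continuous f := continuous_iff_continuousAt.2 fun t => (hf t).continuousAt
  have hgc : Continuous g := continuous_iff_continuousAt.2 fun t => (hg t).continuousAt
  obtain ⟨K, hK⟩ := (hv.locallyLipschitz.locallyLipschitzOn
    (s := f '' Set.Icc A B ∪ g '' Set.Icc A B)).exists_lipschitzOnWith_of_compact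
    ((isCompact_Icc.image hfc).union (isCompact_Icc.image hgc))
  exact ODE_solution_unique_of_mem_Ioo (v := fun _ => v)
    (s := fun _ => f '' Set.Icc A B ∪ g '' Set.Icc A B) (fun _ _ => hK) Ht₀
    (fun s hs => ⟨hf s, Or.inl ⟨s, Set.Ioo_subset_Icc_self hs, rfl⟩⟩)
    (fun s hs => ⟨hg s, Or.inr ⟨s, Set.Ioo_subset_Icc_self hs, rfl⟩⟩) heq Ht

noncomputable section

/-! ### The Hamilton vector field of `p₂` -/

lemma hamX_apply {n : ℕ} {g : Fin n → Fin n → (Fin n → ℝ) → ℝ} {g₀ : Fin n → Fin n → ℝ} {μ : ℝ}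
    (hg : AssumpG g g₀ μ) (x ξ : Fin n → ℝ) (j : Fin n) :
    HamX g x ξ j = 2 * ∑ k, g j k x * ξ k := by
  have hp : ∀ i : Fin n, HasFDerivAt (fun ζ : Fin n → ℝ => ζ i)
      (ContinuousLinearMap.proj (R := ℝ) (φ := fun _ : Fin n => ℝ) i) ξ :=
    fun i => hasFDerivAt_apply i ξ
  have h := HasFDerivAt.fun_sum (u := Finset.univ) fun i _ =>
    HasFDerivAt.fun_sum (u := Finset.univ) fun k _ => ((hp i).const_mul (g i k x)).fun_mul (hp k)
  have h' : fderiv ℝ (fun ζ => p2 g x ζ) ξ = _ := h.fderiv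
  simp only [HamX, h']
  simp only [sum_apply, add_apply,
    smul_apply, ContinuousLinearMap.proj_apply, smul_eq_mul,
    Finset.sum_add_distrib, Pi.single_apply, mul_ite, mul_one, mul_zero, Finset.sum_ite_eq',
    Finset.mem_univ, if_true]
  have h2 : ∀ i : Fin n, (∑ k, if i = j then ξ k * g i k x else 0) =
      if i = j then ∑ k, ξ k * g i k x else 0 := fun i => by split_ifs <;> simp
  simp only [h2, Finset.sum_ite_eq', Finset.mem_univ, if_true, two_mul]
  congr 1
  · exact Finset.sum_congr rfl fun k _ => by rw [hg.symm k j]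
  · exact Finset.sum_congr rfl fun k _ => mul_comm _ _

lemma hamXi_apply {n : ℕ} {g : Fin n → Fin n → (Fin n → ℝ) → ℝ} {g₀ : Fin n → Fin n → ℝ} {μ : ℝ}
    (hg : AssumpG g g₀ μ) (x ξ : Fin n → ℝ) (j : Fin n) :
    HamXi g x ξ j = -∑ k, ∑ l, pd j (g k l) x * ξ k * ξ l := by
  have hd : ∀ k l, HasFDerivAt (g k l) (fderiv ℝ (g k l) x) x := fun k l =>
    ((hg.smooth k l).differentiable (by simp) x).hasFDerivAt
  have h := HasFDerivAt.fun_sum (u := Finset.univ) fun k _ =>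
    HasFDerivAt.fun_sum (u := Finset.univ) fun l _ =>
      (((hd k l).mul_const (ξ k)).mul_const (ξ l))
  have h' : fderiv ℝ (fun y => p2 g y ξ) x = _ := h.fderiv
  simp only [HamXi, h']
  simp only [sum_apply, smul_apply, smul_eq_mul, pd]
  congr 1
  exact Finset.sum_congr rfl fun k _ => Finset.sum_congr rfl fun l _ => by ring

lemma contDiff_hamilton {n : ℕ} {g : Fin n → Fin n → (Fin n → ℝ) → ℝ} {g₀ : Fin n → Fin n → ℝ}
    {μ : ℝ} (hg : AssumpG g g₀ μ) :
    ContDiff ℝ 1 (fun z : (Fin n → ℝ) × (Fin n → ℝ) => (HamX g z.1 z.2, HamXi g z.1 z.2)) := by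
  have hξ : ∀ k, ContDiff ℝ 1 (fun z : (Fin n → ℝ) × (Fin n → ℝ) => z.2 k) := fun k =>
    (contDiff_apply ℝ ℝ k).comp contDiff_snd
  have hgs : ∀ j k, ContDiff ℝ 1 (fun z : (Fin n → ℝ) × (Fin n → ℝ) => g j k z.1) := fun j k =>
    ((hg.smooth j k).of_le (by exact_mod_cast le_top)).comp contDiff_fst
  have hpd : ∀ j k l, ContDiff ℝ 1
      (fun z : (Fin n → ℝ) × (Fin n → ℝ) => pd j (g k l) z.1) := fun j k l =>
    (((hg.smooth k l).fderiv_right (m := 1)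
      (WithTop.coe_le_coe.2 (le_top : (2 : ℕ∞) ≤ ⊤))).clm_apply
      contDiff_const).comp contDiff_fst
  refine ContDiff.prodMk (contDiff_pi.2 fun j => ?_) (contDiff_pi.2 fun j => ?_)
  · simp only [hamX_apply hg]
    exact contDiff_const.mul (ContDiff.sum fun k _ => (hgs j k).mul (hξ k))
  · simp only [hamXi_apply hg]
    exact (ContDiff.sum fun k _ => ContDiff.sum fun l _ =>
      ((hpd j k l).mul (hξ k)).mul (hξ l)).neg

/-! ### Passage to Euclidean space and decay estimates -/

lemma nrm_eq_norm {n : ℕ} (x : Fin n → ℝ) : nrm x = ‖WithLp.toLp 2 x‖ := by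
  simp [nrm, EuclideanSpace.norm_eq]

lemma jap_eq {n : ℕ} (x : Fin n → ℝ) : jap x = Real.sqrt (1 + ‖WithLp.toLp 2 x‖ ^ 2) := by
  simp [jap, EuclideanSpace.norm_sq_eq]

lemma dotp_eq_inner {n : ℕ} (x y : Fin n → ℝ) :
    dotp x y = inner ℝ (WithLp.toLp 2 x) (WithLp.toLp 2 y) := by
  simp [dotp, PiLp.inner_apply, mul_comm]

lemma abs_apply_le_norm {n : ℕ} (x : Fin n → ℝ) (j : Fin n) : |x j| ≤ ‖WithLp.toLp 2 x‖ :=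
  PiLp.norm_apply_le (WithLp.toLp 2 x) j

lemma norm_toLp_le {n : ℕ} {v : Fin n → ℝ} {B : ℝ} (h : ∀ j, |v j| ≤ B) :
    ‖WithLp.toLp 2 v‖ ≤ n * B := by
  have h1 : ‖WithLp.toLp 2 v‖ ≤ ∑ j, |v j| := by
    rw [EuclideanSpace.norm_eq]
    refine Real.sqrt_le_iff.2 ⟨Finset.sum_nonneg fun j _ => abs_nonneg _, ?_⟩
    exact Finset.sum_sq_le_sq_sum_of_nonneg fun j _ => abs_nonneg _
  refine h1.trans ((Finset.sum_le_sum fun j _ => h j).trans ?_)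
  simp

/-- The linear map `v = 2 g₀` on Euclidean space. -/
def vLin {n : ℕ} (g₀ : Fin n → Fin n → ℝ) :
    EuclideanSpace ℝ (Fin n) →ₗ[ℝ] EuclideanSpace ℝ (Fin n) where
  toFun ξ := WithLp.toLp 2 (vv g₀ ξ.ofLp)
  map_add' a b := by
    ext j
    simp [vv, mul_add, Finset.sum_add_distrib]
  map_smul' c a := by
    ext j
    simp only [vv, PiLp.smul_apply, smul_eq_mul, RingHom.id_apply,
      Finset.mul_sum]
    exact Finset.sum_congr rfl fun k _ => by ring

/-- Nondegeneracy of `g₀` in quantitative form. -/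
lemma vLin_lower {n : ℕ} {g : Fin n → Fin n → (Fin n → ℝ) → ℝ} {g₀ : Fin n → Fin n → ℝ} {μ : ℝ}
    (hg : AssumpG g g₀ μ) : ∃ c > 0, ∀ ξ, c * ‖ξ‖ ≤ ‖vLin g₀ ξ‖ := by
  have hker : LinearMap.ker (vLin g₀) = ⊥ := by
    rw [LinearMap.ker_eq_bot']
    intro ξ hξ
    have h1 : ξ.ofLp = 0 := hg.nondeg0 _ fun j => by
      have h2 : vv g₀ ξ.ofLp j = 0 := congrArg (fun w => w.ofLp j) hξ
      simpa [vv] using h2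
    ext j
    simp [h1]
  obtain ⟨K, hK, hanti⟩ := (vLin g₀).exists_antilipschitzWith hker
  have hK' : (0 : ℝ) < K := hK
  refine ⟨(K : ℝ)⁻¹, inv_pos.2 hK', fun ξ => ?_⟩
  have h1 := hanti.le_mul_dist ξ 0
  rw [map_zero, dist_zero_right, dist_zero_right] at h1
  rwa [inv_mul_le_iff₀ hK']

lemma hamX_sub_le {n : ℕ} {g : Fin n → Fin n → (Fin n → ℝ) → ℝ} {g₀ : Fin n → Fin n → ℝ} {μ : ℝ}
    (hg : AssumpG g g₀ μ) : ∃ C > 0, ∀ x ξ : Fin n → ℝ,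
      ‖WithLp.toLp 2 (HamX g x ξ) - WithLp.toLp 2 (vv g₀ ξ)‖ ≤
        C * jap x ^ (-μ) * ‖WithLp.toLp 2 ξ‖ := by
  obtain ⟨C, hC, hb⟩ := hg.decay []
  simp only [pdL, List.length_nil, Nat.cast_zero, sub_zero] at hb
  refine ⟨n * (2 * (n * C)) + 1, by positivity, fun x ξ => ?_⟩
  have hJ : 0 ≤ jap x ^ (-μ) := Real.rpow_nonneg (Real.sqrt_nonneg _) _
  have h : ∀ j, |(HamX g x ξ - vv g₀ ξ) j| ≤
      2 * (n * (C * jap x ^ (-μ) * ‖WithLp.toLp 2 ξ‖)) := by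
    intro j
    rw [Pi.sub_apply, hamX_apply hg, vv, ← mul_sub, ← Finset.sum_sub_distrib, abs_mul, abs_two]
    refine mul_le_mul_of_nonneg_left ((Finset.abs_sum_le_sum_abs _ _).trans ?_) two_pos.le
    refine (Finset.sum_le_sum (g := fun _ => C * jap x ^ (-μ) * ‖WithLp.toLp 2 ξ‖)
      fun k _ => ?_).trans (by simp)
    rw [← sub_mul, abs_mul]
    exact mul_le_mul (hb j k x) (abs_apply_le_norm ξ k) (abs_nonneg _) (by positivity)
  have h2 := norm_toLp_le h
  rw [WithLp.toLp_sub] at h2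
  have h3 : 0 ≤ jap x ^ (-μ) * ‖WithLp.toLp 2 ξ‖ := by positivity
  linarith

lemma hamXi_le {n : ℕ} {g : Fin n → Fin n → (Fin n → ℝ) → ℝ} {g₀ : Fin n → Fin n → ℝ} {μ : ℝ}
    (hg : AssumpG g g₀ μ) : ∃ C > 0, ∀ x ξ : Fin n → ℝ,
      ‖WithLp.toLp 2 (HamXi g x ξ)‖ ≤ C * jap x ^ (-μ - 1) * ‖WithLp.toLp 2 ξ‖ ^ 2 := by
  have hb' : ∀ i : Fin n, ∃ C > 0, ∀ j k x, |pd i (g j k) x| ≤ C * jap x ^ (-μ - 1) := by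
    intro i
    obtain ⟨C, hC, hb⟩ := hg.decay [i]
    refine ⟨C, hC, fun j k x => ?_⟩
    simpa [pdL, pd, fderiv_sub_const] using hb j k x
  choose D hD hb using hb'
  set C := ∑ i, D i
  have hDC : ∀ i, D i ≤ C := fun i =>
    Finset.single_le_sum (fun i _ => (hD i).le) (Finset.mem_univ i)
  have hC0 : 0 ≤ C := Finset.sum_nonneg fun i _ => (hD i).le
  refine ⟨n * (n * (n * C)) + 1, by positivity, fun x ξ => ?_⟩
  have hJ : 0 ≤ jap x ^ (-μ - 1) := Real.rpow_nonneg (Real.sqrt_nonneg _) _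
  set B := C * jap x ^ (-μ - 1) * ‖WithLp.toLp 2 ξ‖ * ‖WithLp.toLp 2 ξ‖ with hB
  have h : ∀ j, |HamXi g x ξ j| ≤ n * (n * B) := by
    intro j
    rw [hamXi_apply hg, abs_neg]
    refine (Finset.abs_sum_le_sum_abs _ _).trans ?_
    refine (Finset.sum_le_sum (g := fun _ => n * B) fun k _ => ?_).trans (by simp)
    refine (Finset.abs_sum_le_sum_abs _ _).trans ?_
    refine (Finset.sum_le_sum (g := fun _ => B) fun l _ => ?_).trans (by simp)
    rw [abs_mul, abs_mul, hB]
    refine mul_le_mul (mul_le_mul ((hb j k l x).trans ?_) (abs_apply_le_norm ξ k)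
      (abs_nonneg _) (by positivity)) (abs_apply_le_norm ξ l) (abs_nonneg _) (by positivity)
    exact mul_le_mul_of_nonneg_right (hDC j) hJ
  have h2 := norm_toLp_le h
  have h3 : 0 ≤ jap x ^ (-μ - 1) * ‖WithLp.toLp 2 ξ‖ ^ 2 := by positivity
  rw [hB] at h2
  linarith

/-! ### Hamilton trajectories -/

/-- Asymptotics as `t → +∞` of a Hamilton trajectory that escapes to infinity with nonvanishing
momentum. No nullity is needed once the escape is known. -/
lemma hamilton_forward {n : ℕ} {g : Fin n → Fin n → (Fin n → ℝ) → ℝ}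
    {g₀ : Fin n → Fin n → ℝ} {μ : ℝ} (hμ : 0 < μ) (hg : AssumpG g g₀ μ) {y η : ℝ → Fin n → ℝ}
    (hy : ∀ t, HasDerivAt y (HamX g (y t) (η t)) t)
    (hη : ∀ t, HasDerivAt η (HamXi g (y t) (η t)) t) (hne : ∀ t, η t ≠ 0)
    (hesc : Tendsto (fun t => nrm (y t)) atTop atTop) :
    ∃ ξ : Fin n → ℝ, ξ ≠ 0 ∧ Tendsto η atTop (𝓝 ξ) ∧
      Tendsto (fun t : ℝ => t⁻¹ • y t) atTop (𝓝 (vv g₀ ξ)) ∧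
      Tendsto (fun t => dotp ((nrm (y t))⁻¹ • y t) (vhat g₀ (η t))) atTop (𝓝 1) := by
  obtain ⟨c, hc, hL⟩ := vLin_lower hg
  obtain ⟨C₀, hC₀, hb₀⟩ := hamX_sub_le hg
  obtain ⟨C₁, hC₁, hb₁⟩ := hamXi_le hg
  set L : EuclideanSpace ℝ (Fin n) →L[ℝ] EuclideanSpace ℝ (Fin n) :=
    LinearMap.toContinuousLinearMap (vLin g₀) with hLdef
  set e : (Fin n → ℝ) →L[ℝ] EuclideanSpace ℝ (Fin n) :=
    (EuclideanSpace.equiv (Fin n) ℝ).symm.toContinuousLinearMap with he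
  have hLe : ∀ ξ, L (WithLp.toLp 2 ξ) = WithLp.toLp 2 (vv g₀ ξ) := fun ξ => rfl
  have hJ : ∀ x : Fin n → ℝ, ∀ s : ℝ, 0 ≤ jap x ^ s := fun x s =>
    Real.rpow_nonneg (Real.sqrt_nonneg _) _
  obtain ⟨ζ, hζ0, hζ, hyζ⟩ := forward_asymptotics L hc (add_pos hC₀ hC₁) hμ hL
    (y := fun t => WithLp.toLp 2 (y t)) (y' := fun t => WithLp.toLp 2 (HamX g (y t) (η t)))
    (η := fun t => WithLp.toLp 2 (η t)) (η' := fun t => WithLp.toLp 2 (HamXi g (y t) (η t)))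
    (fun t => e.hasFDerivAt.comp_hasDerivAt t (hy t))
    (fun t => e.hasFDerivAt.comp_hasDerivAt t (hη t))
    (fun t h => hne t (by simpa using h)) (by simpa only [nrm_eq_norm] using hesc)
    (fun t => by
      rw [← jap_eq, hLe]
      refine (hb₀ _ _).trans ?_
      have := hJ (y t) (-μ)
      gcongr
      linarith)
    (fun t => by
      rw [← jap_eq]
      refine (hb₁ _ _).trans ?_
      have := hJ (y t) (-μ - 1)
      gcongr
      linarith)
  have hcont : Continuous (fun w : EuclideanSpace ℝ (Fin n) => w.ofLp) :=
    (EuclideanSpace.equiv (Fin n) ℝ).continuous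
  refine ⟨ζ.ofLp, fun h => hζ0 (by ext j; simp [h]), (hcont.tendsto ζ).comp hζ,
    (hcont.tendsto _).comp hyζ, ?_⟩
  have hLζ : ‖L ζ‖ ≠ 0 := by
    have h1 := hL ζ
    have h2 : 0 < c * ‖ζ‖ := mul_pos hc (norm_pos_iff.2 hζ0)
    exact (h2.trans_le h1).ne'
  have hLη : Tendsto (fun t => L (WithLp.toLp 2 (η t))) atTop (𝓝 (L ζ)) :=
    (L.continuous.tendsto ζ).comp hζ
  have hlim := (hyζ.norm.inv₀ hLζ).mul ((hLη.norm.inv₀ hLζ).mul (hyζ.inner hLη))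
  have h1 : ‖L ζ‖⁻¹ * (‖L ζ‖⁻¹ * inner ℝ (L ζ) (L ζ)) = 1 := by
    rw [real_inner_self_eq_norm_sq]
    field_simp
  rw [h1] at hlim
  refine hlim.congr' ?_
  filter_upwards [eventually_gt_atTop 0] with t ht
  rw [dotp_eq_inner, vhat, nrm_eq_norm, nrm_eq_norm, WithLp.toLp_smul, WithLp.toLp_smul,
    real_inner_smul_left, real_inner_smul_right, real_inner_smul_left, norm_smul, norm_inv,
    Real.norm_of_nonneg ht.le, hLe, mul_inv, inv_inv]
  field_simp

end

/-- backward asymptotics of null non-trapped trajectories,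
Section 4. Under Assumptions A and B, for every null initial datum
`(x₀,ξ₀)` with `ξ₀ ≠ 0` and every global solution `(y,η)` of the Hamilton
equations through `(x₀,ξ₀)`, there is `ξ₋ ≠ 0` such that `η(t) → ξ₋` and
`y(t)/t → v(ξ₋)` as `t → −∞`; consequently `ŷ(t)·v̂(η(t)) → −1` as `t → −∞`. -/
theorem stmt_17 {n : ℕ} (hn : 2 ≤ n)
    (g : Fin n → Fin n → (Fin n → ℝ) → ℝ) (g₀ : Fin n → Fin n → ℝ)
    (μ : ℝ) (hμ0 : 0 < μ) (hμ1 : μ < 1) (hg : AssumpG g g₀ μ)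
    (hB : AssumptionB g)
    (x₀ ξ₀ : Fin n → ℝ) (hnull : p2 g x₀ ξ₀ = 0) (hξ₀ : ξ₀ ≠ 0)
    (y η : ℝ → Fin n → ℝ) (hy0 : y 0 = x₀) (hη0 : η 0 = ξ₀)
    (hy : ∀ t, HasDerivAt y (HamX g (y t) (η t)) t)
    (hη : ∀ t, HasDerivAt η (HamXi g (y t) (η t)) t) :
    ∃ ξm : Fin n → ℝ, ξm ≠ 0 ∧
      Tendsto η atBot (nhds ξm) ∧
      Tendsto (fun t => t⁻¹ • y t) atBot (nhds (vv g₀ ξm)) ∧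
      Tendsto (fun t => dotp ((nrm (y t))⁻¹ • y t) (vhat g₀ (η t)))
        atBot (nhds (-1 : ℝ)) := by
  have huniq : ∀ (a b c d : ℝ → Fin n → ℝ) (t₀ : ℝ),
      (∀ t, HasDerivAt a (HamX g (a t) (b t)) t) → (∀ t, HasDerivAt b (HamXi g (a t) (b t)) t) →
      (∀ t, HasDerivAt c (HamX g (c t) (d t)) t) → (∀ t, HasDerivAt d (HamXi g (c t) (d t)) t) →
      a t₀ = c t₀ → b t₀ = d t₀ → ∀ t, a t = c t ∧ b t = d t := by
    intro a b c d t₀ ha hb hc hd h1 h2 t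
    have h := autonomous_unique (contDiff_hamilton hg) (t₀ := t₀)
      (f := fun t => (a t, b t)) (g := fun t => (c t, d t))
      (fun t => (ha t).prodMk (hb t)) (fun t => (hc t).prodMk (hd t)) (Prod.ext h1 h2)
    exact Prod.mk.inj (congrFun h t)
  have hesc : Tendsto (fun t => nrm (y t)) atBot atTop := by
    obtain ⟨y₁, η₁, h1, h2, h3, h4, -, h5⟩ := hB x₀ ξ₀ hnull hξ₀
    have h6 := huniq y₁ η₁ y η 0 h3 h4 hy hη (h1.trans hy0.symm) (h2.trans hη0.symm)
    exact h5.congr fun t => by rw [(h6 t).1]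
  have hne : ∀ t, η t ≠ 0 := by
    intro t₀ h0
    -- Otherwise the trajectory would be the stationary solution through `(y t₀, 0)`.
    have hX : HamX g (y t₀) 0 = 0 := by ext j; simp [hamX_apply hg]
    have hXi : HamXi g (y t₀) 0 = 0 := by ext j; simp [hamXi_apply hg]
    have h := huniq y η (fun _ => y t₀) (fun _ => 0) t₀ hy hη
      (fun t => by rw [hX]; exact hasDerivAt_const t _)
      (fun t => by rw [hXi]; exact hasDerivAt_const t _) rfl h0 0
    exact hξ₀ (hη0 ▸ h.2)
  have hvneg : ∀ ξ, vv g₀ (-ξ) = -vv g₀ ξ := fun ξ => by ext j; simp [vv]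
  -- As `p₂` is even in the momentum, `(y(-t), -η(-t))` is again a Hamilton trajectory.
  obtain ⟨ξ, hξ, hlim1, hlim2, hlim3⟩ := hamilton_forward hμ0 hg
    (y := fun t => y (-t)) (η := fun t => -η (-t))
    (fun t => by
      have h : HamX g (y (-t)) (-η (-t)) = -HamX g (y (-t)) (η (-t)) := by
        ext j; simp [hamX_apply hg]
      rw [h]
      simpa using! (hy (-t)).scomp t (hasDerivAt_neg t))
    (fun t => by
      have h : HamXi g (y (-t)) (-η (-t)) = HamXi g (y (-t)) (η (-t)) := by
        ext j; simp [hamXi_apply hg]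
      rw [h]
      simpa using! ((hη (-t)).scomp t (hasDerivAt_neg t)).neg)
    (fun t => neg_ne_zero.2 (hne _)) (hesc.comp tendsto_neg_atTop_atBot)
  have hflip : Tendsto (fun t : ℝ => -t) atBot atTop := tendsto_neg_atBot_atTop
  refine ⟨-ξ, neg_ne_zero.2 hξ, ?_, ?_, ?_⟩
  · simpa [Function.comp_def] using (hlim1.comp hflip).neg
  · rw [hvneg]
    simpa [Function.comp_def, inv_neg] using (hlim2.comp hflip).neg
  · have h := (hlim3.comp hflip).neg
    refine h.congr fun t => ?_
    have h1 : vhat g₀ (-η t) = -vhat g₀ (η t) := by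
      simp [vhat, hvneg, nrm]
    simp [h1, dotp]
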